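/- Let ≤ be an embedding order on A*. Let W, V ∈ A* with V = b₁b₂⋯b_m, let X = b₁⋯b_i be a prefix of V and Y = b_{i+1}⋯b_m the corresponding suffix, so that V = XY. Let P be the maximal prefix of W such that P ≤ X, and write W = PS. Then W ≤ V if and only if S ≤ Y. -/

import Mathlib

/-- An alphabet `A` whose letters carry positive integer weights, extended additively to
words (`List A`).  An *embedding order* is a partial order `le` on words such that the
empty word is minimum, containment of distinct words strictly increases the weight, and
containment into `V = b₁⋯b_m` is witnessed by a factorisation of the smaller word into
`m` (possibly empty) factors, the `i`-th factor being contained in the single letter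
`bᵢ`. -/
structure EmbeddingOrder (A : Type*) (w : A → ℕ) where
  le : List A → List A → Prop
  le_refl : ∀ W, le W W
  le_trans : ∀ {U V W}, le U V → le V W → le U W
  le_antisymm : ∀ {V W}, le V W → le W V → V = W
  nil_le : ∀ W, le [] W
  weight_lt : ∀ {W V}, le W V → W ≠ V → (W.map w).sum < (V.map w).sum
  le_iff_factor : ∀ W V, le W V ↔ ∃ Ws : List (List A),
    Ws.length = V.length ∧ Ws.flatten = W ∧ ∀ q ∈ Ws.zip V, le q.1 [q.2]

/-!
The words below `V = b₁⋯b_m` form the product of the languages below its letters, so the language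
below `X ++ Y` is the product of those below `X` and `Y`. If `P' ++ S'` is any decomposition of
`P ++ S` along this product, then `P'` is no longer than the greedy prefix `P`, hence `S` is a
suffix of `S'`, and the language below `Y` is closed under suffixes.
-/

theorem mem_language_prod_iff_forall₂ {A : Type*} {Ls : List (Language A)} {W : List A} :
    W ∈ Ls.prod ↔ ∃ Ws : List (List A), Ws.flatten = W ∧ List.Forall₂ (· ∈ ·) Ws Ls := by
  induction Ls generalizing W with
  | nil => simp [eq_comm]
  | cons L Ls ih =>
    rw [List.prod_cons, Language.mem_mul]
    constructor
    · rintro ⟨U, hU, T, hT, rfl⟩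
      obtain ⟨Ws, rfl, hWs⟩ := ih.1 hT
      exact ⟨U :: Ws, List.flatten_cons, .cons hU hWs⟩
    · rintro ⟨_, rfl, hUWs⟩
      obtain ⟨U, Ws, hU, hWs, rfl⟩ := List.forall₂_cons_right_iff.1 hUWs
      exact ⟨U, hU, Ws.flatten, ih.2 ⟨Ws, rfl, hWs⟩, List.flatten_cons.symm⟩

theorem suffix_of_append_eq_append_of_length_le {A : Type*} {P P' S S' : List A}
    (h : P' ++ S' = P ++ S) (hlen : P'.length ≤ P.length) : S <:+ S' := by
  refine List.suffix_of_suffix_length_le ⟨P, rfl⟩ ⟨P', h⟩ ?_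
  have := congrArg List.length h
  simp only [List.length_append] at this
  omega

theorem greedy_embedding_general {A : Type*} {L M : Language A} {P S : List A}
    (hM : ∀ ⦃S T : List A⦄, S <:+ T → T ∈ M → S ∈ M) (hP : P ∈ L)
    (hPmax : ∀ P' : List A, P' <+: P ++ S → P' ∈ L → P'.length ≤ P.length) :
    P ++ S ∈ L * M ↔ S ∈ M := by
  refine ⟨fun h => ?_, Language.append_mem_mul hP⟩
  obtain ⟨P', hP', S', hS', heq⟩ := Language.mem_mul.1 h
  have hlen : P'.length ≤ P.length := hPmax P' ⟨S', heq⟩ hP'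
  exact hM (suffix_of_append_eq_append_of_length_le heq hlen) hS'

namespace EmbeddingOrder

variable {A : Type*} {w : A → ℕ} (E : EmbeddingOrder A w)

/-- The principal down-set of a word in an embedding order, encoded as a language so that
concatenation of factors becomes multiplication. -/
def downset (V : List A) : Language A :=
  {W | E.le W V}

theorem mem_downset {W V : List A} : W ∈ E.downset V ↔ E.le W V :=
  Iff.rfl

theorem downset_eq_prod (V : List A) : E.downset V = (V.map fun a => E.downset [a]).prod := by
  ext W
  rw [mem_language_prod_iff_forall₂, mem_downset, E.le_iff_factor]
  simp only [List.forall₂_map_right_iff, mem_downset]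
  simp only [List.forall₂_iff_zip, Prod.forall, and_left_comm]

theorem downset_append (X Y : List A) : E.downset (X ++ Y) = E.downset X * E.downset Y := by
  rw [E.downset_eq_prod (X ++ Y), List.map_append, List.prod_append, ← downset_eq_prod,
    ← downset_eq_prod]

theorem le_of_suffix {S T : List A} (h : S <:+ T) : E.le S T := by
  obtain ⟨U, rfl⟩ := h
  rw [← mem_downset, downset_append]
  exact Language.mem_mul.2 ⟨[], E.nil_le U, S, E.le_refl S, List.nil_append S⟩

theorem mem_downset_of_suffix {S T V : List A} (h : S <:+ T) (hT : T ∈ E.downset V) :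
    S ∈ E.downset V :=
  E.le_trans (E.le_of_suffix h) hT

end EmbeddingOrder

/-- **Greedy embedding (Proposition `prop-greed-is-good`).**
Let `≤` be an embedding order on `A*`.  Let `W, V ∈ A*`, write `V = X ++ Y` where `X` is
a prefix of `V` and `Y` the corresponding suffix.  Let `P` be the maximal prefix of `W`
with `P ≤ X`, and write `W = P ++ S`.  Then `W ≤ V` if and only if `S ≤ Y`. -/
theorem greedy_embedding {A : Type*} (w : A → ℕ) (E : EmbeddingOrder A w)
    (W V X Y P S : List A)
    (hV : V = X ++ Y) (hW : W = P ++ S)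
    (hPX : E.le P X)
    (hPmax : ∀ P' : List A, P' <+: W → E.le P' X → P'.length ≤ P.length) :
    E.le W V ↔ E.le S Y := by
  subst hV hW
  rw [← E.mem_downset, ← E.mem_downset, E.downset_append]
  exact greedy_embedding_general (fun _ _ => E.mem_downset_of_suffix) hPX hPmax
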